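/- Let P be a finite super logic program and K its standard Kripke model. For every world I of K, the full interpretation K(I) satisfies every formula that belongs to all static expansions of P; in particular, if P has a least static expansion \overline{P}, then K(I) is a model of \overline{P}. -/

import Mathlib

/-!
Each static expansion of `T` has the form `CnNot (T ∪ not '' B)`. The models of such a theory are
the models of `T` whose default part lies in some set of valuations (`satTheory_of_dflt_eq`), so
enlarging `B` only removes default parts, and minimal models stay minimal
(`IsMinModel.anti`). Hence `B ↦ {F | CnNot (T ∪ not '' B) ⊨_min ¬F}` is monotone, and its least
fixed point yields a static expansion `CnNot (T ∪ not '' B₀)`; it is enough to prove that this one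
holds in the standard Kripke model `K`.

By the fixed point property of `N_P`, the default part of a world `I` of `K` coincides with the
default part of the reduct of `K(I)` (`reductDef_interp`), and every world sees some world. So the
set of formulas valid in `K` contains `P` and is closed under the axioms and rules defining
`CnNot`. Let `B_K` be the set of formulas `F` with `not F` valid in `K`. Worlds seen from a world
are minimal models of `P`, and therefore minimal models of `CnNot (P ∪ not '' B_K)`. Thus `B_K` is
a prefixed point of the operator above, so `B₀ ⊆ B_K`.
-/

/-- Formulas of the modal language `L_not` over the set `At` of objective atoms.
`not F` is the default negation atom for a formula `F` (arbitrary nesting allowed). -/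
inductive Fml (At : Type) : Type
  | atom : At → Fml At
  | tru : Fml At
  | fls : Fml At
  | neg : Fml At → Fml At
  | conj : Fml At → Fml At → Fml At
  | disj : Fml At → Fml At → Fml At
  | impl : Fml At → Fml At → Fml At
  | equiv : Fml At → Fml At → Fml At
  | not : Fml At → Fml At

/-- An interpretation of `L_not`: a truth value for every objective atom and for
every default atom `not F` (the latter treated as new propositional atoms). -/
structure Interp (At : Type) where
  obj : At → Prop
  dflt : Fml At → Prop

/-- Classical satisfaction of a formula by an interpretation. -/
def Interp.sat {At : Type} (I : Interp At) : Fml At → Prop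
  | Fml.atom a => I.obj a
  | Fml.tru => True
  | Fml.fls => False
  | Fml.neg F => ¬ Interp.sat I F
  | Fml.conj F G => Interp.sat I F ∧ Interp.sat I G
  | Fml.disj F G => Interp.sat I F ∨ Interp.sat I G
  | Fml.impl F G => Interp.sat I F → Interp.sat I G
  | Fml.equiv F G => (Interp.sat I F ↔ Interp.sat I G)
  | Fml.not F => I.dflt F

/-- `I` is a model of the theory `T`. -/
def Interp.satTheory {At : Type} (I : Interp At) (T : Set (Fml At)) : Prop :=
  ∀ F ∈ T, I.sat F

/-- A set `S` contains `T`, the axioms (CA) and (DA), and is closed under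
classical propositional consequence and the invariance rule (IR). -/
def CnClosed {At : Type} (T S : Set (Fml At)) : Prop :=
  T ⊆ S ∧
  Fml.not Fml.fls ∈ S ∧
  Fml.neg (Fml.not Fml.tru) ∈ S ∧
  (∀ F G : Fml At,
    Fml.equiv (Fml.not (Fml.disj F G)) (Fml.conj (Fml.not F) (Fml.not G)) ∈ S) ∧
  (∀ F : Fml At, (∀ I : Interp At, I.satTheory S → I.sat F) → F ∈ S) ∧
  (∀ F G : Fml At, Fml.equiv F G ∈ S → Fml.equiv (Fml.not F) (Fml.not G) ∈ S)

/-- `Cn_not(T)`: the smallest set of formulas containing `T`, the axioms (CA), (DA),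
closed under propositional consequence and the invariance rule (IR). -/
def CnNot {At : Type} (T : Set (Fml At)) : Set (Fml At) :=
  ⋂₀ {S | CnClosed T S}

/-- `M` is smaller than `N`: they agree on all default atoms and the objective atoms
true in `M` form a proper subset of those true in `N`. -/
def Smaller {At : Type} (M N : Interp At) : Prop :=
  M.dflt = N.dflt ∧ {a | M.obj a} ⊂ {a | N.obj a}

/-- `M` is a minimal model of `T`. -/
def IsMinModel {At : Type} (T : Set (Fml At)) (M : Interp At) : Prop :=
  M.satTheory T ∧ ∀ N : Interp At, N.satTheory T → ¬ Smaller N M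

/-- `T ⊨_min F`: `F` is true in all minimal models of `T`. -/
def MinEntails {At : Type} (T : Set (Fml At)) (F : Fml At) : Prop :=
  ∀ M : Interp At, IsMinModel T M → M.sat F

/-- `Td` is a static expansion of `T`. -/
def IsStaticExpansion {At : Type} (T Td : Set (Fml At)) : Prop :=
  Td = CnNot (T ∪ {G | ∃ F : Fml At, MinEntails Td (Fml.neg F) ∧ G = Fml.not F})

/-- `Tbar` is the least static expansion of `T`. -/
def IsLeastStaticExpansion {At : Type} (T Tbar : Set (Fml At)) : Prop :=
  IsStaticExpansion T Tbar ∧ ∀ Td : Set (Fml At), IsStaticExpansion T Td → Tbar ⊆ Td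

/-- A Kripke structure with worlds `W`, visibility relation `R` and
valuation `V` of the objective atoms at each world. -/
structure Kripke (At W : Type) where
  R : W → W → Prop
  V : W → At → Prop

/-- Truth of a formula of `L_not` at a world of a Kripke structure:
classical for the propositional connectives, and
`not F` is true at `w` iff `F` is false at every world seen from `w`. -/
def Kripke.sat {At W : Type} (K : Kripke At W) : W → Fml At → Prop
  | w, Fml.atom a => K.V w a
  | _, Fml.tru => True
  | _, Fml.fls => False
  | w, Fml.neg F => ¬ Kripke.sat K w F
  | w, Fml.conj F G => Kripke.sat K w F ∧ Kripke.sat K w G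
  | w, Fml.disj F G => Kripke.sat K w F ∨ Kripke.sat K w G
  | w, Fml.impl F G => Kripke.sat K w F → Kripke.sat K w G
  | w, Fml.equiv F G => (Kripke.sat K w F ↔ Kripke.sat K w G)
  | w, Fml.not F => ∀ w' : W, K.R w w' → ¬ Kripke.sat K w' F

/-- The interpretation `K(w)` of `L_not` induced by the world `w`:
an objective or default atom is true in it iff it is true at `w`. -/
def Kripke.interp {At W : Type} (K : Kripke At W) (w : W) : Interp At where
  obj a := K.sat w (Fml.atom a)
  dflt F := K.sat w (Fml.not F)

/-- A clause of a super logic program: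
`A1 ∨ … ∨ Ak ← B1 ∧ … ∧ Bm ∧ not C1 ∧ … ∧ not Cn`, where the `Ai` (head) and
`Bi` (posBody) are objective atoms and the `Ci` (negBody) are finite
conjunctions of objective atoms. -/
structure Clause (At : Type) where
  head : List At
  posBody : List At
  negBody : List (List At)

/-- Valuations of the objective atoms (`Obj`). -/
abbrev ObjVal (At : Type) := At → Prop

/-- Valuations of the default atoms `not(p1 ∧ … ∧ pn)`, indexed by the list
`[p1, …, pn]` of atoms of the conjunction. -/
abbrev DefVal (At : Type) := List At → Prop

/-- `Def`: the valuations of the default atoms making `not(true)`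
(the empty conjunction case) false. -/
def DefSet (At : Type) : Set (DefVal At) := {d | ¬ d []}

/-- Satisfaction of a clause by a reduced interpretation `I_obj ∪ I_def`. -/
def satClause {At : Type} (Io : ObjVal At) (Id : DefVal At) (c : Clause At) : Prop :=
  ((∀ b ∈ c.posBody, Io b) ∧ (∀ C ∈ c.negBody, Id C)) → ∃ a ∈ c.head, Io a

/-- `I_obj ∪ I_def` is a model of the super program `P`. -/
def satProg {At : Type} (Io : ObjVal At) (Id : DefVal At) (P : Set (Clause At)) : Prop :=
  ∀ c ∈ P, satClause Io Id c

/-- `I_obj ∪ I_def` is a minimal model of `P`: it is a model and no model with the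
same default part has a strictly smaller set of true objective atoms. -/
def IsMinModelProg {At : Type} (P : Set (Clause At)) (Io : ObjVal At) (Id : DefVal At) : Prop :=
  satProg Io Id P ∧
  ∀ Io' : ObjVal At, satProg Io' Id P → ¬ ({a | Io' a} ⊂ {a | Io a})

/-- `I_def` is given by the set `O` of objective valuations:
`I_def ⊨ not(p1∧…∧pn)` iff every valuation in `O` satisfies `¬(p1∧…∧pn)`. -/
def givenBy {At : Type} (Id : DefVal At) (O : Set (ObjVal At)) : Prop :=
  ∀ E : List At, Id E ↔ ∀ Io ∈ O, ∃ p ∈ E, ¬ Io p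

/-- The operator `Φ_P`: objective parts of minimal models of `P` whose default part
belongs to `D`. -/
def PhiOp {At : Type} (P : Set (Clause At)) (D : Set (DefVal At)) : Set (ObjVal At) :=
  {Io | ∃ Id ∈ D, IsMinModelProg P Io Id}

/-- The operator `Ψ_P`: default valuations given by some nonempty subset of `O`
and extendable to a model of `P`. -/
def PsiOp {At : Type} (P : Set (Clause At)) (O : Set (ObjVal At)) : Set (DefVal At) :=
  {Id | Id ∈ DefSet At ∧
        (∃ O' ⊆ O, O'.Nonempty ∧ givenBy Id O') ∧
        (∃ Io : ObjVal At, satProg Io Id P)}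

/-- The operator `Λ_P := Ψ_P ∘ Φ_P`. -/
def LamOp {At : Type} (P : Set (Clause At)) : Set (DefVal At) → Set (DefVal At) :=
  PsiOp P ∘ PhiOp P

/-- The conjunction `p1 ∧ … ∧ pn` of a list of objective atoms
(the empty conjunction is `true`, a one-element list is just the atom). -/
def conjAtoms {At : Type} : List At → Fml At
  | [] => Fml.tru
  | [p] => Fml.atom p
  | p :: q :: ps => Fml.conj (Fml.atom p) (conjAtoms (q :: ps))

/-- Conjunction of a list of formulas. -/
def conjList {At : Type} : List (Fml At) → Fml At
  | [] => Fml.tru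
  | [F] => F
  | F :: G :: Gs => Fml.conj F (conjList (G :: Gs))

/-- Disjunction `p1 ∨ … ∨ pk` of a list of objective atoms (empty = `false`). -/
def disjAtoms {At : Type} : List At → Fml At
  | [] => Fml.fls
  | [p] => Fml.atom p
  | p :: q :: ps => Fml.disj (Fml.atom p) (disjAtoms (q :: ps))

/-- The default atom `not(p1 ∧ … ∧ pn)`, with `not(true)` (the case `n = 0`)
identified with `false`. -/
def notConj {At : Type} : List At → Fml At
  | [] => Fml.fls
  | p :: ps => Fml.not (conjAtoms (p :: ps))

/-- The formula of `L_not` corresponding to a program clause. -/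
def Clause.toFml {At : Type} (c : Clause At) : Fml At :=
  Fml.impl (conjList (c.posBody.map Fml.atom ++ c.negBody.map notConj))
    (disjAtoms c.head)

/-- The default part of the reduct of a full interpretation `I`:
its restriction to the default atoms `not(p1 ∧ … ∧ pn)`. -/
def reductDef {At : Type} (I : Interp At) : DefVal At :=
  fun E => I.dflt (conjAtoms E)

/-- Worlds of the standard Kripke model of `P` (relative to a set `NP` of default
valuations): reduced interpretations `I = I_obj ∪ I_def` with `I ⊨ P` and `I_def ∈ NP`. -/
def StdWorld {At : Type} (P : Set (Clause At)) (NP : Set (DefVal At)) : Type :=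
  {I : ObjVal At × DefVal At // satProg I.1 I.2 P ∧ I.2 ∈ NP}

/-- The standard Kripke model of `P` (relative to `NP`): `R(I, I')` iff `I'` is a
minimal model of `P` and every default atom true in `I` has its conjunction falsified
by `I'`; the valuation of a world is its objective part. -/
def stdKripke {At : Type} (P : Set (Clause At)) (NP : Set (DefVal At)) :
    Kripke At (StdWorld P NP) where
  R I I' := IsMinModelProg P I'.1.1 I'.1.2 ∧
    ∀ E : List At, I.1.2 E → ∃ p ∈ E, ¬ I'.1.1 p
  V I a := I.1.1 a

/-! ### The closure `CnNot` and monotonicity of minimal entailment -/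

section Closure

variable {At : Type}

theorem cnClosed_cnNot (T : Set (Fml At)) : CnClosed T (CnNot T) := by
  refine ⟨fun F hF S hS => hS.1 hF, fun S hS => hS.2.1, fun S hS => hS.2.2.1,
    fun F G S hS => hS.2.2.2.1 F G, fun F hF S hS => hS.2.2.2.2.1 F fun I hI => hF I ?_,
    fun F G h S hS => hS.2.2.2.2.2 F G (h S hS)⟩
  exact fun G hG => hI G (hG S hS)

theorem cnNot_subset {T S : Set (Fml At)} (h : CnClosed T S) : CnNot T ⊆ S :=
  Set.sInter_subset_of_mem h

theorem cnNot_mono {T U : Set (Fml At)} (h : T ⊆ U) : CnNot T ⊆ CnNot U :=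
  cnNot_subset ⟨h.trans (cnClosed_cnNot U).1, (cnClosed_cnNot U).2⟩

/-- Besides `T`, the theory `CnNot (T ∪ not '' B)` constrains only the default part of an
interpretation. -/
theorem satTheory_of_dflt_eq {T B : Set (Fml At)} {M N : Interp At}
    (hM : M.satTheory (CnNot (T ∪ Fml.not '' B))) (hN : N.satTheory T)
    (hd : N.dflt = M.dflt) : N.satTheory (CnNot (T ∪ Fml.not '' B)) := by
  set S := CnNot (T ∪ Fml.not '' B) with hS
  obtain ⟨h1, h2, h3, h4, h5, h6⟩ : CnClosed (T ∪ Fml.not '' B) S := cnClosed_cnNot _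
  suffices h : CnClosed (T ∪ Fml.not '' B) {F | F ∈ S ∧ N.sat F} from
    fun F hF => (cnNot_subset h hF).2
  refine ⟨?_, ⟨h2, ?_⟩, ⟨h3, ?_⟩, fun F G => ⟨h4 F G, ?_⟩, fun F hF => ⟨h5 F ?_, ?_⟩,
    fun F G h => ⟨h6 F G h.1, ?_⟩⟩
  · rintro F hF
    refine ⟨h1 hF, ?_⟩
    rcases hF with hF | ⟨G, hG, rfl⟩
    · exact hN F hF
    · have := hM _ (h1 (Or.inr ⟨G, hG, rfl⟩))
      simpa [Interp.sat, hd] using this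
  · simpa [Interp.sat, hd] using hM _ h2
  · simpa [Interp.sat, hd] using hM _ h3
  · simpa [Interp.sat, hd] using hM _ (h4 F G)
  · exact fun I hI => hF I fun G hG => hI G hG.1
  · exact hF N fun G hG => hG.2
  · simpa [Interp.sat, hd] using hM _ (h6 F G h.1)

/-- Adding default atoms to the theory preserves minimality of the models that remain. -/
theorem IsMinModel.anti {T B B' : Set (Fml At)} (h : B ⊆ B') {M : Interp At}
    (hM : IsMinModel (CnNot (T ∪ Fml.not '' B')) M) :
    IsMinModel (CnNot (T ∪ Fml.not '' B)) M := by
  refine ⟨fun F hF => hM.1 F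
    (cnNot_mono (Set.union_subset_union_right T (Set.image_mono h)) hF), fun N hN hlt => ?_⟩
  refine hM.2 N (satTheory_of_dflt_eq hM.1 (fun F hF => hN F ?_) hlt.1) hlt
  exact (cnClosed_cnNot _).1 (Or.inl hF)

/-- The operator sending a set `B` of formulas believed false by default to the set of formulas
false in all minimal models of `CnNot (T ∪ not '' B)`. Its fixed points correspond to the static
expansions of `T`. -/
def beliefOp (T : Set (Fml At)) : Set (Fml At) →o Set (Fml At) where
  toFun B := {F | MinEntails (CnNot (T ∪ Fml.not '' B)) (Fml.neg F)}
  monotone' _ _ h _ hF M hM := hF M (hM.anti h)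

theorem isStaticExpansion_lfp (T : Set (Fml At)) :
    IsStaticExpansion T (CnNot (T ∪ Fml.not '' (beliefOp T).lfp)) := by
  have h : Fml.not '' (beliefOp T).lfp = {G | ∃ F : Fml At,
      MinEntails (CnNot (T ∪ Fml.not '' (beliefOp T).lfp)) (Fml.neg F) ∧ G = Fml.not F} := by
    conv_lhs => rw [← (beliefOp T).map_lfp]
    ext G
    exact ⟨fun ⟨F, hF, e⟩ => ⟨F, hF, e.symm⟩, fun ⟨F, hF, e⟩ => ⟨F, hF, e.symm⟩⟩
  unfold IsStaticExpansion
  rw [← h]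

end Closure

/-! ### Satisfaction of program clauses and truth in Kripke structures -/

section Satisfaction

variable {At W : Type}

theorem Interp.sat_conjList (M : Interp At) :
    ∀ L : List (Fml At), M.sat (conjList L) ↔ ∀ F ∈ L, M.sat F
  | [] => by simp [conjList, Interp.sat]
  | [F] => by simp [conjList]
  | F :: G :: Gs => by
    simp [conjList, Interp.sat, Interp.sat_conjList M (G :: Gs)]

theorem Interp.sat_disjAtoms (M : Interp At) :
    ∀ L : List At, M.sat (disjAtoms L) ↔ ∃ a ∈ L, M.obj a
  | [] => by simp [disjAtoms, Interp.sat]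
  | [F] => by simp [disjAtoms, Interp.sat]
  | F :: G :: Gs => by
    simp [disjAtoms, Interp.sat, Interp.sat_disjAtoms M (G :: Gs)]

/-- The proviso on `not true` is needed because `notConj []` is the constant `false`. -/
theorem Interp.sat_notConj {M : Interp At} (h : ¬ M.dflt Fml.tru) :
    ∀ E : List At, M.sat (notConj E) ↔ reductDef M E
  | [] => by simpa [notConj, Interp.sat, reductDef, conjAtoms] using h
  | p :: ps => by simp [notConj, Interp.sat, reductDef]

theorem Interp.sat_toFml {M : Interp At} (h : ¬ M.dflt Fml.tru) (c : Clause At) :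
    M.sat c.toFml ↔ satClause M.obj (reductDef M) c := by
  have key : (∀ F ∈ c.posBody.map Fml.atom ++ c.negBody.map notConj, M.sat F) ↔
      (∀ b ∈ c.posBody, M.obj b) ∧ ∀ C ∈ c.negBody, reductDef M C := by
    simp only [List.forall_mem_append, List.forall_mem_map, Interp.sat_notConj h]
    rfl
  simp only [Clause.toFml, Interp.sat, Interp.sat_conjList, Interp.sat_disjAtoms, satClause, key]

theorem Interp.satTheory_toFml {M : Interp At} (h : ¬ M.dflt Fml.tru) (P : Set (Clause At)) :
    M.satTheory (Clause.toFml '' P) ↔ satProg M.obj (reductDef M) P := by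
  simp [Interp.satTheory, satProg, Interp.sat_toFml h]

theorem Kripke.sat_conjAtoms (K : Kripke At W) (w : W) :
    ∀ E : List At, K.sat w (conjAtoms E) ↔ ∀ p ∈ E, K.V w p
  | [] => by simp [conjAtoms, Kripke.sat]
  | [F] => by simp [conjAtoms, Kripke.sat]
  | F :: G :: Gs => by
    simp [conjAtoms, Kripke.sat, Kripke.sat_conjAtoms K w (G :: Gs)]

theorem Kripke.interp_sat (K : Kripke At W) (w : W) (F : Fml At) :
    (K.interp w).sat F ↔ K.sat w F := by
  induction F with
  | atom a => rfl
  | not F => rfl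
  | _ => simp_all [Interp.sat, Kripke.sat]

/-- Validity in a serial Kripke structure is closed under the axioms and rules of `CnNot`. -/
theorem Kripke.cnClosed_valid (K : Kripke At W) (hser : ∀ w, ∃ w', K.R w w')
    {T : Set (Fml At)} (hT : ∀ F ∈ T, ∀ w, K.sat w F) :
    CnClosed T {F | ∀ w, K.sat w F} := by
  refine ⟨hT, ?_, ?_, ?_, ?_, ?_⟩
  · simp [Kripke.sat]
  · simpa [Kripke.sat] using hser
  · intro F G w
    simp only [Kripke.sat]
    grind
  · intro F hF w
    exact (K.interp_sat w F).1 (hF _ fun G hG => (K.interp_sat w G).2 (hG w))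
  · intro F G h w
    simp only [Set.mem_ofPred_eq, Kripke.sat] at h ⊢
    simp only [h]

end Satisfaction

/-! ### The standard Kripke model -/

section Standard

variable {At : Type} {P : Set (Clause At)} {D : Set (DefVal At)}

/-- Every world sees all the members of some nonempty set of objective valuations giving its
default part. -/
theorem exists_givenBy_visible (hfix : LamOp P D = D) (I : StdWorld P D) :
    ∃ O : Set (ObjVal At), O.Nonempty ∧ givenBy I.1.2 O ∧
      ∀ Io ∈ O, ∃ I' : StdWorld P D, (stdKripke P D).R I I' ∧ I'.1.1 = Io := by
  have hI : I.1.2 ∈ LamOp P D := hfix.symm ▸ I.2.2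
  obtain ⟨-, ⟨O, hO, hne, hg⟩, -⟩ := hI
  refine ⟨O, hne, hg, fun Io hIo => ?_⟩
  obtain ⟨Id, hId, hmin⟩ := hO hIo
  exact ⟨⟨(Io, Id), hmin.1, hId⟩, ⟨hmin, fun E hE => (hg E).1 hE Io hIo⟩, rfl⟩

theorem stdKripke_serial (hfix : LamOp P D = D) (I : StdWorld P D) :
    ∃ I', (stdKripke P D).R I I' := by
  obtain ⟨O, ⟨Io, hIo⟩, -, h⟩ := exists_givenBy_visible hfix I
  exact (h Io hIo).imp fun _ h => h.1

theorem reductDef_interp (hfix : LamOp P D = D) (I : StdWorld P D) :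
    reductDef ((stdKripke P D).interp I) = I.1.2 := by
  funext E
  have h : reductDef ((stdKripke P D).interp I) E ↔
      ∀ I', (stdKripke P D).R I I' → ¬ ∀ p ∈ E, I'.1.1 p := by
    simp only [reductDef, Kripke.interp, Kripke.sat, Kripke.sat_conjAtoms]
    rfl
  rw [h]
  refine propext ⟨fun hall => ?_, fun hE I' hR hp => ?_⟩
  · obtain ⟨O, -, hg, hvis⟩ := exists_givenBy_visible hfix I
    refine (hg E).2 fun Io hIo => ?_
    obtain ⟨I', hR, rfl⟩ := hvis Io hIo
    simpa using hall I' hR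
  · obtain ⟨p, hpE, hnp⟩ := hR.2 E hE
    exact hnp (hp p hpE)

theorem not_interp_dflt_tru (hfix : LamOp P D = D) (I : StdWorld P D) :
    ¬ ((stdKripke P D).interp I).dflt Fml.tru := by
  obtain ⟨I', hR⟩ := stdKripke_serial hfix I
  exact fun h => h I' hR trivial

theorem interp_satTheory_prog (hfix : LamOp P D = D) (I : StdWorld P D) :
    ((stdKripke P D).interp I).satTheory (Clause.toFml '' P) := by
  rw [Interp.satTheory_toFml (not_interp_dflt_tru hfix I), reductDef_interp hfix]
  exact I.2.1

theorem cnNot_subset_valid (hfix : LamOp P D = D) {B : Set (Fml At)}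
    (hB : ∀ F ∈ B, ∀ I, (stdKripke P D).sat I (Fml.not F)) :
    CnNot (Clause.toFml '' P ∪ Fml.not '' B) ⊆ {F | ∀ I, (stdKripke P D).sat I F} := by
  refine cnNot_subset (Kripke.cnClosed_valid _ (stdKripke_serial hfix) ?_)
  rintro F (hF | ⟨G, hG, rfl⟩) I
  · exact (Kripke.interp_sat _ I F).1 (interp_satTheory_prog hfix I F hF)
  · exact hB G hG I

/-- The set of formulas `F` with `not F` valid in the standard Kripke model is a prefixed point
of `beliefOp`, hence contains its least fixed point. -/
theorem lfp_beliefOp_valid (hfix : LamOp P D = D) :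
    ∀ F ∈ (beliefOp (Clause.toFml '' P)).lfp, ∀ I, (stdKripke P D).sat I (Fml.not F) := by
  suffices h : (beliefOp (Clause.toFml '' P)).lfp ≤
      {F | ∀ I, (stdKripke P D).sat I (Fml.not F)} from fun F hF => h hF
  refine OrderHom.lfp_le _ fun F hF I I' hR hsat => ?_
  refine hF ((stdKripke P D).interp I') ⟨fun G hG => ?_, fun N hN hlt => ?_⟩
    ((Kripke.interp_sat _ I' F).2 hsat)
  · exact (Kripke.interp_sat _ I' G).2 (cnNot_subset_valid hfix (fun _ h => h) hG I')
  · have htru : ¬ N.dflt Fml.tru := hlt.1 ▸ not_interp_dflt_tru hfix I'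
    have hred : reductDef N = I'.1.2 := by
      rw [← reductDef_interp hfix I']
      exact funext fun E => congrFun hlt.1 (conjAtoms E)
    have hNP := (Interp.satTheory_toFml htru P).1
      fun G hG => hN G ((cnClosed_cnNot _).1 (Or.inl hG))
    exact hR.1.2 N.obj (hred ▸ hNP) hlt.2

end Standard

/-- Let `P` be a finite super logic program and `K` its standard Kripke model (with
`N_P` the fixed point of the iteration of `Λ_P` from `Def`).  For every world `I` of
`K`, the full interpretation `K(I)` satisfies every formula belonging to all static
expansions of `P`; in particular, if `P` has a least static expansion `Pbar`, then
`K(I)` is a model of `Pbar`. -/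
theorem stdKripke_model_of_least_staticExpansion {At : Type} [Finite At]
    (P : Set (Clause At)) (hPfin : P.Finite)
    (k : ℕ) (hfix : (LamOp P)^[k + 1] (DefSet At) = (LamOp P)^[k] (DefSet At))
    (I : StdWorld P ((LamOp P)^[k] (DefSet At))) :
    (∀ F : Fml At,
        (∀ Td : Set (Fml At), IsStaticExpansion (Clause.toFml '' P) Td → F ∈ Td) →
        ((stdKripke P ((LamOp P)^[k] (DefSet At))).interp I).sat F) ∧
    (∀ Pbar : Set (Fml At), IsLeastStaticExpansion (Clause.toFml '' P) Pbar →
        ((stdKripke P ((LamOp P)^[k] (DefSet At))).interp I).satTheory Pbar) := by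
  have hfix' : LamOp P ((LamOp P)^[k] (DefSet At)) = (LamOp P)^[k] (DefSet At) := by
    rwa [Function.iterate_succ_apply'] at hfix
  have main : ∀ F : Fml At,
      (∀ Td : Set (Fml At), IsStaticExpansion (Clause.toFml '' P) Td → F ∈ Td) →
      ((stdKripke P ((LamOp P)^[k] (DefSet At))).interp I).sat F := fun F hF =>
    (Kripke.interp_sat _ I F).2 (cnNot_subset_valid hfix' (lfp_beliefOp_valid hfix')
      (hF _ (isStaticExpansion_lfp _)) I)
  exact ⟨main, fun Pbar h F hF => main F fun Td hTd => h.2 Td hTd hF⟩
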